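/- Let γ be the standard Gaussian measure on ℝⁿ and u : ℝⁿ → ℝ bounded with u ∈ BV(ℝⁿ, γ). Then ∫∫ |u(x) − u(e^{-t}x + √(1−e^{-2t})y)| dγ(x) dγ(y) ≤ c_t |D_γ u|(ℝⁿ), where c_t = √(2/π) ∫₀ᵗ e^{-s}/√(1−e^{-2s}) ds. -/

import Mathlib

open MeasureTheory Real
open scoped RealInnerProductSpace

noncomputable def stdGaussian (n : ℕ) : Measure (EuclideanSpace ℝ (Fin n)) :=
  volume.withDensity fun x => ENNReal.ofReal ((2 * π) ^ (-(n : ℝ) / 2) * Real.exp (-‖x‖ ^ 2 / 2))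

def IsC1b {E : Type*} [NormedAddCommGroup E] [NormedSpace ℝ E] (φ : E → ℝ) : Prop :=
  ContDiff ℝ 1 φ ∧ ∃ C, ∀ x, |φ x| ≤ C ∧ ‖fderiv ℝ φ x‖ ≤ C

/-- `u ∈ BV(ℝⁿ,γ)` with Gaussian derivative `D_γ u = ν σ` in polar form: `σ` is a finite positive
measure, `‖ν‖ = 1` `σ`-a.e., and the Gaussian integration-by-parts formula holds; `σ(ℝⁿ)` is the
total variation `|D_γ u|(ℝⁿ)`. -/
def IsGaussDeriv (n : ℕ) (u : EuclideanSpace ℝ (Fin n) → ℝ)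
    (σ : Measure (EuclideanSpace ℝ (Fin n)))
    (ν : EuclideanSpace ℝ (Fin n) → EuclideanSpace ℝ (Fin n)) : Prop :=
  IsFiniteMeasure σ ∧ (∀ᵐ x ∂σ, ‖ν x‖ = 1) ∧
  ∀ φ : EuclideanSpace ℝ (Fin n) → ℝ, IsC1b φ → ∀ h,
    ∫ x, u x * fderiv ℝ φ x h ∂(stdGaussian n) =
      -∫ x, φ x * ⟪ν x, h⟫ ∂σ + ∫ x, u x * φ x * ⟪h, x⟫ ∂(stdGaussian n)

/-!
Put `cos θ = e^{-t}`. The point `e^{-t} x + √(1 - e^{-2t}) y` is the first component of the rotation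
`R_θ (x, y)`, and `c_t = √(2/π) θ`. Since `γ ⊗ γ` is invariant under rotations, for a test function
`g` with `|g| ≤ 1` the integral of `u(R_θ(x, y)₁) g(x, y)` is that of `u(x) (g ∘ R_{-θ})(x, y)`. Its
derivative in `θ` integrates `u(x)` against the derivative of `G = g ∘ R_{-θ}` along `(-y, x)`,
which is the difference of the Gaussian adjoints of `∂_y` in the variable `x` and of `∂_x` in the
variable `y`. The second one has mean zero in `y`, and the first one, by the definition of
`D_γ u = ν σ`, gives `∫∫ G(x, y) ⟪ν(x), y⟫ dσ(x) dγ(y)`. As `∫ |⟪ν, y⟫| dγ(y) = √(2/π) ‖ν‖`, the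
derivative is bounded by `√(2/π) |D_γ u|(ℝⁿ)`; integrating in `θ` and taking the supremum over `g`
concludes.
-/

section C1b

variable {E F : Type*} [NormedAddCommGroup E] [NormedSpace ℝ E] [NormedAddCommGroup F]
  [NormedSpace ℝ F] {φ : E → ℝ}

lemma isC1b_const (c : ℝ) : IsC1b fun _ : E => c :=
  ⟨contDiff_const, |c|, fun x => by simp⟩

lemma IsC1b.add_const (hφ : IsC1b φ) (c : ℝ) : IsC1b fun x => φ x + c := by
  obtain ⟨hφ, K, hK⟩ := hφ
  refine ⟨hφ.add contDiff_const, K + |c|, fun x => ⟨?_, ?_⟩⟩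
  · exact (abs_add_le _ _).trans (by gcongr; exact (hK x).1)
  · rw [fderiv_add_const]
    linarith [(hK x).2, abs_nonneg c]

lemma IsC1b.of_hasCompactSupport (hφ : ContDiff ℝ 1 φ) (hs : HasCompactSupport φ) :
    IsC1b φ := by
  obtain ⟨C, hC⟩ := hs.exists_bound_of_continuous hφ.continuous
  obtain ⟨K, hK⟩ := (hs.fderiv (𝕜 := ℝ)).exists_bound_of_continuous
    (hφ.continuous_fderiv one_ne_zero)
  exact ⟨hφ, max C K, fun x => ⟨(hC x).trans (le_max_left _ _), (hK x).trans (le_max_right _ _)⟩⟩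

lemma IsC1b.fderiv_comp (hφ : IsC1b φ) {f : F → E} {f' : F →L[ℝ] E} {x : F}
    (hf : HasFDerivAt f f' x) : fderiv ℝ (fun x => φ (f x)) x = (fderiv ℝ φ (f x)).comp f' :=
  ((hφ.1.differentiable one_ne_zero _).hasFDerivAt.comp x hf).fderiv

lemma IsC1b.comp_of_hasFDerivAt_const (hφ : IsC1b φ) {f : F → E} {L : F →L[ℝ] E}
    (hf : ∀ x, HasFDerivAt f L x) : IsC1b fun x => φ (f x) := by
  have hfC1 : ContDiff ℝ 1 f := contDiff_one_iff_hasFDerivAt.2 ⟨fun _ => L, continuous_const, hf⟩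
  obtain ⟨K, hK⟩ := hφ.2
  refine ⟨hφ.1.comp hfC1, max K (K * ‖L‖), fun x => ⟨(hK _).1.trans (le_max_left _ _), ?_⟩⟩
  rw [hφ.fderiv_comp (hf x)]
  refine ((ContinuousLinearMap.opNorm_comp_le _ _).trans ?_).trans (le_max_right _ _)
  gcongr
  exact (hK _).2

variable [MeasurableSpace E] [BorelSpace E] {μ : Measure E}

lemma IsC1b.integrable_mul (hφ : IsC1b φ) {f : E → ℝ} (hf : Integrable f μ) :
    Integrable (fun x => φ x * f x) μ := by
  obtain ⟨hφ, K, hK⟩ := hφ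
  exact hf.bdd_mul (c := K) hφ.continuous.aestronglyMeasurable (.of_forall fun x => (hK x).1)

lemma IsC1b.integrable_fderiv_apply [SecondCountableTopology E] (hφ : IsC1b φ) {V : E → E}
    (hV : Integrable V μ) : Integrable (fun x => fderiv ℝ φ x (V x)) μ := by
  obtain ⟨hφ, K, hK⟩ := hφ
  refine (hV.norm.const_mul K).mono' ?_ (.of_forall fun x => ?_)
  · exact (isBoundedBilinearMap_apply (𝕜 := ℝ)).continuous.comp_aestronglyMeasurable
      ((hφ.continuous_fderiv one_ne_zero).aestronglyMeasurable.prodMk hV.1)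
  · exact (ContinuousLinearMap.le_opNorm _ _).trans (by gcongr; exact (hK x).2)

end C1b

section L1Duality

variable {E : Type*} [NormedAddCommGroup E] [NormedSpace ℝ E]

/-- Compactly supported `C¹` functions with values in `[-1, 1]`: the test functions against which
the `L¹` norm is computed by duality. -/
structure IsUnitTestFunction (g : E → ℝ) : Prop where
  contDiff : ContDiff ℝ 1 g
  hasCompactSupport : HasCompactSupport g
  abs_le_one : ∀ x, |g x| ≤ 1

variable [FiniteDimensional ℝ E]

lemma exists_isUnitTestFunction_abs_sub_le {f : E → ℝ} (hf : Continuous f)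
    (hfs : HasCompactSupport f) (hf1 : ∀ x, |f x| ≤ 1) {ε : ℝ} (hε : 0 < ε) :
    ∃ g, IsUnitTestFunction g ∧ ∀ x, |f x - g x| ≤ ε := by
  obtain ⟨g, hg, hgf, hgs⟩ :=
    hf.exists_contDiff_approx 1 (ε := fun _ => ε / 2) continuous_const fun _ => half_pos hε
  have hdist (x : E) : |g x - f x| ≤ ε / 2 := (hgf x).le
  have hbound (x : E) : |g x| ≤ 1 + ε / 2 := by
    linarith [abs_sub_abs_le_abs_sub (g x) (f x), hdist x, hf1 x]
  have hpos : 0 < 1 + ε / 2 := by positivity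
  have hscaled (x : E) : |g x / (1 + ε / 2)| ≤ 1 := by
    rw [abs_div, abs_of_pos hpos, div_le_one hpos]
    exact hbound x
  refine ⟨fun x => g x / (1 + ε / 2), ⟨(hg.of_le le_rfl).div_const _, ?_, hscaled⟩, fun x => ?_⟩
  · exact (hfs.mono hgs).comp_left (g := fun r : ℝ => r / (1 + ε / 2)) (zero_div _)
  · have hscale : |g x - g x / (1 + ε / 2)| ≤ ε / 2 := by
      rw [show g x - g x / (1 + ε / 2) = g x / (1 + ε / 2) * (ε / 2) by field_simp; ring, abs_mul,
        abs_of_pos (half_pos hε)]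
      exact mul_le_of_le_one_left (half_pos hε).le (hscaled x)
    linarith [abs_sub_le (f x) (g x) (g x / (1 + ε / 2)), abs_sub_comm (f x) (g x), hdist x]

lemma abs_sub_max_neg_one_min_one_le {a : ℝ} (ha : |a| ≤ 1) (r : ℝ) :
    |a - max (-1) (min r 1)| ≤ |a - r| := by
  obtain ⟨h₁, h₂⟩ := abs_le.1 ha
  grind

variable [MeasurableSpace E] [BorelSpace E] {μ : Measure E}

lemma exists_isUnitTestFunction_integral_abs_sub_le [IsFiniteMeasure μ] {s : E → ℝ}
    (hs : AEStronglyMeasurable s μ) (hs1 : ∀ x, |s x| ≤ 1) {ε : ℝ} (hε : 0 < ε) :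
    ∃ g, IsUnitTestFunction g ∧ ∫ x, |s x - g x| ∂μ ≤ ε := by
  have hsi : Integrable s μ := .of_bound hs 1 (.of_forall hs1)
  obtain ⟨f, hfs, hsf, hf, hfi⟩ := hsi.exists_hasCompactSupport_integral_sub_le (half_pos hε)
  have hm : 0 < 2 * (μ.real Set.univ + 1) := by positivity
  obtain ⟨g, hg, hfg⟩ := exists_isUnitTestFunction_abs_sub_le
    (f := fun x => max (-1) (min (f x) 1)) (by fun_prop)
    (hfs.comp_left (g := fun r : ℝ => max (-1) (min r 1)) (by norm_num))
    (fun x => abs_le.2 ⟨le_max_left _ _, max_le (by norm_num) (min_le_right _ _)⟩)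
    (div_pos hε hm)
  refine ⟨g, hg, ?_⟩
  set δ := ε / (2 * (μ.real Set.univ + 1))
  have hgi : Integrable g μ :=
    hg.contDiff.continuous.integrable_of_hasCompactSupport hg.hasCompactSupport
  calc ∫ x, |s x - g x| ∂μ
      ≤ ∫ x, (‖s x - f x‖ + δ) ∂μ :=
        integral_mono (hsi.sub hgi).abs ((hsi.sub hfi).norm.add (integrable_const δ)) fun x =>
          (abs_sub_le _ _ _).trans
            (add_le_add (abs_sub_max_neg_one_min_one_le (hs1 x) _) (hfg x))
    _ = ∫ x, ‖s x - f x‖ ∂μ + μ.real Set.univ * δ := by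
        simpa using integral_add (hsi.sub hfi).norm (integrable_const δ)
    _ ≤ ε / 2 + ε / 2 := by
        gcongr
        rw [mul_div_assoc', div_le_iff₀ hm]
        linarith
    _ = ε := add_halves ε

-- The sign of `w` is approximated in `L¹` of the finite measure `|w| μ`, for which the error of the
-- approximation `g` is exactly `∫ ||w| - w g| ∂μ`.
lemma integral_abs_le_of_forall_isUnitTestFunction {w : E → ℝ} (hw : Integrable w μ) {B : ℝ}
    (h : ∀ g, IsUnitTestFunction g → ∫ x, w x * g x ∂μ ≤ B) : ∫ x, |w x| ∂μ ≤ B := by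
  refine le_of_forall_pos_le_add fun ε hε => ?_
  have : IsFiniteMeasure (μ.withDensity fun x => ‖w x‖ₑ) := isFiniteMeasure_withDensity hw.2.ne
  have hs : AEStronglyMeasurable (fun x => w x / ‖w x‖) μ :=
    (hw.1.aemeasurable.div hw.norm.1.aemeasurable).aestronglyMeasurable
  have hs1 (x : E) : |w x / ‖w x‖| ≤ 1 := by
    rw [abs_div, abs_norm, norm_eq_abs]
    exact div_self_le_one _
  have hsw (x : E) : w x * (w x / ‖w x‖) = |w x| := by
    rw [← mul_div_assoc, ← abs_mul_abs_self, norm_eq_abs, mul_self_div_self]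
  obtain ⟨g, hg, hsg⟩ := exists_isUnitTestFunction_integral_abs_sub_le
    (hs.mono_ac (withDensity_absolutelyContinuous μ fun x => ‖w x‖ₑ)) hs1 hε
  rw [integral_withDensity_eq_integral_toReal_smul₀ hw.1.enorm
    (.of_forall fun _ => enorm_lt_top)] at hsg
  have hwg : Integrable (fun x => w x * g x) μ :=
    hw.mul_bdd (c := 1) hg.contDiff.continuous.aestronglyMeasurable (.of_forall hg.abs_le_one)
  have hdiff (x : E) : ‖w x‖ₑ.toReal • |w x / ‖w x‖ - g x| = ‖|w x| - w x * g x‖ := by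
    rw [← hsw, ← mul_sub, norm_mul, toReal_enorm, smul_eq_mul, norm_eq_abs (_ - _)]
  simp only [hdiff] at hsg
  have hle : ∫ x, |w x| ∂μ - ∫ x, w x * g x ∂μ ≤ ∫ x, ‖|w x| - w x * g x‖ ∂μ := by
    rw [← integral_sub hw.abs hwg]
    exact (le_abs_self _).trans abs_integral_le_integral_abs
  linarith [h g hg]

end L1Duality

section StdGaussian

lemma integral_abs_gaussianReal_zero_one :
    ∫ x, |x| ∂(ProbabilityTheory.gaussianReal 0 1) = √(2 / π) := by
  have hpdf (x : ℝ) : ProbabilityTheory.gaussianPDFReal 0 1 x • |x| =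
      (√(2 * π))⁻¹ * (|x| ^ (1 : ℝ) * exp (-(1 / 2) * |x| ^ (2 : ℝ))) := by
    simp only [ProbabilityTheory.gaussianPDFReal, NNReal.coe_one, smul_eq_mul, rpow_one, rpow_two,
      sq_abs]
    ring_nf
  rw [ProbabilityTheory.integral_gaussianReal_eq_integral_smul one_ne_zero]
  simp only [hpdf]
  rw [integral_comp_abs (f := fun r => (√(2 * π))⁻¹ * (r ^ (1 : ℝ) * exp (-(1 / 2) * r ^ (2 : ℝ)))),
    integral_const_mul, integral_rpow_mul_exp_neg_mul_rpow two_pos (by norm_num) (by norm_num)]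
  have hGamma : (1 / 2 : ℝ) ^ (-((1 : ℝ) + 1) / 2) * (1 / 2) * Gamma ((1 + 1) / 2) = 1 := by
    norm_num
  rw [hGamma, mul_one, sqrt_mul zero_le_two, sqrt_div zero_le_two, ← div_eq_mul_inv,
    div_eq_div_iff (by positivity) (by positivity), ← mul_assoc, mul_self_sqrt zero_le_two]

lemma integral_abs_gaussianReal (v : NNReal) :
    ∫ x, |x| ∂(ProbabilityTheory.gaussianReal 0 v) = √(2 / π) * √v := by
  have hmap : (ProbabilityTheory.gaussianReal 0 1).map (√v * ·) =
      ProbabilityTheory.gaussianReal 0 v := by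
    rw [ProbabilityTheory.gaussianReal_map_const_mul, mul_zero, mul_one]
    congr 1
    exact NNReal.eq (sq_sqrt v.2)
  rw [← hmap, integral_map (by fun_prop) (by fun_prop)]
  simp only [abs_mul, abs_of_nonneg (sqrt_nonneg _)]
  rw [integral_const_mul, integral_abs_gaussianReal_zero_one, mul_comm]

variable {n : ℕ}

/-- The density of the standard Gaussian measure with respect to Lebesgue measure. -/
noncomputable def stdGaussianPDF (n : ℕ) (x : EuclideanSpace ℝ (Fin n)) : ℝ :=
  (2 * π) ^ (-(n : ℝ) / 2) * exp (-‖x‖ ^ 2 / 2)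

lemma toReal_ofReal_stdGaussianPDF (x : EuclideanSpace ℝ (Fin n)) :
    (ENNReal.ofReal (stdGaussianPDF n x)).toReal = stdGaussianPDF n x :=
  ENNReal.toReal_ofReal (by unfold stdGaussianPDF; positivity)

lemma hasFDerivAt_stdGaussianPDF (x : EuclideanSpace ℝ (Fin n)) :
    HasFDerivAt (stdGaussianPDF n) (-stdGaussianPDF n x • innerSL ℝ x) x := by
  have hexp := (((hasFDerivAt_id x).norm_sq.neg.mul_const (1 / 2 : ℝ)).exp).const_mul
    ((2 * π) ^ (-(n : ℝ) / 2))
  refine (hexp.congr_fderiv ?_).congr_of_eventuallyEq (.of_forall fun y => ?_)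
  · ext v
    simp only [neg_apply, smul_apply, ContinuousLinearMap.comp_id, id_eq, Pi.neg_apply,
      coe_innerSL_apply, nsmul_eq_mul, Nat.cast_ofNat, smul_eq_mul, stdGaussianPDF]
    ring_nf
  · simp [stdGaussianPDF, div_eq_mul_inv]

lemma measurable_ofReal_stdGaussianPDF :
    Measurable fun x => ENNReal.ofReal (stdGaussianPDF n x) := by
  unfold stdGaussianPDF
  fun_prop

section Integral

variable {F : Type*} [NormedAddCommGroup F] [NormedSpace ℝ F] {f : EuclideanSpace ℝ (Fin n) → F}

lemma integral_stdGaussian :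
    ∫ x, f x ∂(stdGaussian n) = ∫ x, stdGaussianPDF n x • f x := by
  refine (integral_withDensity_eq_integral_toReal_smul measurable_ofReal_stdGaussianPDF
    (.of_forall fun _ => ENNReal.ofReal_lt_top) f).trans ?_
  simp only [toReal_ofReal_stdGaussianPDF]

lemma integrable_stdGaussian_iff :
    Integrable f (stdGaussian n) ↔ Integrable fun x => stdGaussianPDF n x • f x := by
  refine (integrable_withDensity_iff_integrable_smul' measurable_ofReal_stdGaussianPDF
    (.of_forall fun _ => ENNReal.ofReal_lt_top)).trans ?_
  simp only [toReal_ofReal_stdGaussianPDF]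

end Integral

lemma two_pi_rpow_neg_mul_pi_div_half_cpow (n : ℕ) :
    (((2 * π) ^ (-(n : ℝ) / 2) : ℝ) : ℂ) * (π / (1 / 2 : ℂ)) ^ (n / 2 : ℂ) = 1 := by
  have hcpow : (π / (1 / 2 : ℂ)) ^ (n / 2 : ℂ) = (((2 * π) ^ ((n : ℝ) / 2) : ℝ) : ℂ) := by
    rw [Complex.ofReal_cpow (by positivity)]
    push_cast
    ring_nf
  rw [hcpow, ← Complex.ofReal_mul, ← rpow_add (by positivity), neg_div, neg_add_cancel, rpow_zero,
    Complex.ofReal_one]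

lemma integral_cexp_inner_stdGaussian (w : EuclideanSpace ℝ (Fin n)) :
    ∫ x, Complex.exp (⟪x, w⟫ * Complex.I) ∂(stdGaussian n) = Complex.exp (-‖w‖ ^ 2 / 2) := by
  have hpdf (x : EuclideanSpace ℝ (Fin n)) :
      stdGaussianPDF n x • Complex.exp (⟪x, w⟫ * Complex.I) =
        (((2 * π) ^ (-(n : ℝ) / 2) : ℝ) : ℂ) *
          Complex.exp (-(1 / 2 : ℂ) * ‖x‖ ^ 2 + Complex.I * ⟪w, x⟫) := by
    rw [stdGaussianPDF, real_inner_comm, Complex.real_smul, Complex.exp_add]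
    push_cast
    ring_nf
  rw [integral_stdGaussian]
  simp only [hpdf]
  rw [integral_const_mul, GaussianFourier.integral_cexp_neg_mul_sq_norm_add (by norm_num),
    finrank_euclideanSpace_fin, ← mul_assoc, two_pi_rpow_neg_mul_pi_div_half_cpow, one_mul,
    Complex.I_sq]
  ring_nf

instance isFiniteMeasure_stdGaussian : IsFiniteMeasure (stdGaussian n) := by
  have hone : ∫ _, (1 : ℂ) ∂(stdGaussian n) = 1 := by
    simpa using integral_cexp_inner_stdGaussian (0 : EuclideanSpace ℝ (Fin n))
  have hint : Integrable (fun _ => (1 : ℂ)) (stdGaussian n) :=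
    .of_integral_ne_zero (by rw [hone]; exact one_ne_zero)
  exact (integrable_const_iff.1 hint).resolve_left one_ne_zero

lemma stdGaussian_eq :
    stdGaussian n = ProbabilityTheory.stdGaussian (EuclideanSpace ℝ (Fin n)) := by
  refine Measure.ext_of_charFun (funext fun w => ?_)
  rw [ProbabilityTheory.charFun_stdGaussian, charFun_apply, integral_cexp_inner_stdGaussian]

instance isGaussian_stdGaussian : ProbabilityTheory.IsGaussian (stdGaussian n) := by
  rw [stdGaussian_eq]
  infer_instance

lemma integrable_id_stdGaussian : Integrable (fun x => x) (stdGaussian n) :=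
  ProbabilityTheory.IsGaussian.integrable_id

lemma integral_abs_inner_stdGaussian (h : EuclideanSpace ℝ (Fin n)) :
    ∫ y, |⟪h, y⟫| ∂(stdGaussian n) = √(2 / π) * ‖h‖ := by
  have hmap : (stdGaussian n).map (innerSL ℝ h) =
      ProbabilityTheory.gaussianReal 0 (‖h‖ ^ 2).toNNReal := by
    rw [ProbabilityTheory.IsGaussian.map_eq_gaussianReal, stdGaussian_eq,
      ProbabilityTheory.variance_dual_stdGaussian,
      ProbabilityTheory.integral_strongDual_stdGaussian, innerSL_apply_norm]
  have hnorm : ‖h‖ = √((‖h‖ ^ 2).toNNReal) := by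
    rw [coe_toNNReal _ (sq_nonneg _), sqrt_sq (norm_nonneg _)]
  rw [hnorm, ← integral_abs_gaussianReal, ← hmap, integral_map (by fun_prop) (by fun_prop)]
  rfl

lemma measurePreserving_rotation_stdGaussian (θ : ℝ) :
    MeasurePreserving (ContinuousLinearMap.rotation θ)
      ((stdGaussian n).prod (stdGaussian n)) ((stdGaussian n).prod (stdGaussian n)) := by
  refine ⟨by fun_prop, ProbabilityTheory.IsGaussian.map_rotation_eq_self ?_ θ⟩
  rw [stdGaussian_eq]
  exact ProbabilityTheory.integral_id_stdGaussian

end StdGaussian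

lemma integral_exp_neg_div_sqrt_one_sub_exp {t : ℝ} (ht : 0 ≤ t) :
    ∫ s in (0 : ℝ)..t, exp (-s) / √(1 - exp (-2 * s)) = arccos (exp (-t)) := by
  have hcont : Continuous fun s : ℝ => arccos (exp (-s)) := continuous_arccos.comp (by fun_prop)
  have hderiv (s : ℝ) (hs : s ∈ Set.Ioo 0 t) : HasDerivAt (fun s => arccos (exp (-s)))
      (exp (-s) / √(1 - exp (-2 * s))) s := by
    have hlt : exp (-s) < 1 := exp_lt_one_iff.2 (by linarith [hs.1])
    have harccos := hasDerivAt_arccos (by linarith [exp_pos (-s)]) hlt.ne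
    refine (harccos.comp s (hasDerivAt_neg s).exp).congr_deriv ?_
    rw [← exp_nat_mul]
    push_cast
    ring_nf
  have hint : IntervalIntegrable (fun s => exp (-s) / √(1 - exp (-2 * s))) volume 0 t := by
    rw [intervalIntegrable_iff_integrableOn_Ioc_of_le ht]
    exact intervalIntegral.integrableOn_deriv_of_nonneg hcont.continuousOn hderiv
      fun s _ => by positivity
  rw [intervalIntegral.integral_eq_sub_of_hasDerivAt_of_le ht hcont.continuousOn hderiv hint]
  simp

section GaussAdjoint

variable {E : Type*} [NormedAddCommGroup E] [InnerProductSpace ℝ E]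

/-- The formal adjoint `∂*ₕ φ = φ ⟪h, ·⟫ - ∂ₕ φ` of the derivative in direction `h` with respect to
the standard Gaussian measure. -/
noncomputable def gaussAdjoint (φ : E → ℝ) (h x : E) : ℝ :=
  φ x * ⟪h, x⟫ - fderiv ℝ φ x h

lemma gaussAdjoint_add_right (φ : E → ℝ) (h k x : E) :
    gaussAdjoint φ (h + k) x = gaussAdjoint φ h x + gaussAdjoint φ k x := by
  simp only [gaussAdjoint, inner_add_left, map_add]
  ring

lemma gaussAdjoint_const (c : ℝ) (h x : E) : gaussAdjoint (fun _ => c) h x = c * ⟪h, x⟫ := by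
  simp [gaussAdjoint]

lemma gaussAdjoint_add_const (φ : E → ℝ) (c : ℝ) (h x : E) :
    gaussAdjoint (fun y => φ y + c) h x = gaussAdjoint φ h x + gaussAdjoint (fun _ => c) h x := by
  rw [gaussAdjoint_const, gaussAdjoint, gaussAdjoint, fderiv_add_const]
  ring

lemma IsC1b.integrable_mul_gaussAdjoint [MeasurableSpace E] [BorelSpace E]
    [SecondCountableTopology E] {μ : Measure E} {φ u : E → ℝ} (hφ : IsC1b φ) (hu : Integrable u μ)
    (hux : Integrable (fun x => u x • x) μ) (h : E) :
    Integrable (fun x => u x * gaussAdjoint φ h x) μ := by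
  refine ((hφ.integrable_mul (hux.const_inner h)).sub
    (hφ.integrable_fderiv_apply (hu.smul_const h))).congr (.of_forall fun x => ?_)
  simp only [Pi.sub_apply, gaussAdjoint, inner_smul_right, map_smul, smul_eq_mul]
  ring

lemma integral_gaussAdjoint_stdGaussian {n : ℕ} {φ : EuclideanSpace ℝ (Fin n) → ℝ} (hφ : IsC1b φ)
    (h : EuclideanSpace ℝ (Fin n)) : ∫ x, gaussAdjoint φ h x ∂(stdGaussian n) = 0 := by
  have hφint : Integrable φ (stdGaussian n) := by
    simpa using hφ.integrable_mul (integrable_const (μ := stdGaussian n) (1 : ℝ))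
  have hinner : Integrable (fun x => φ x * ⟪h, x⟫) (stdGaussian n) :=
    hφ.integrable_mul (integrable_id_stdGaussian.const_inner h)
  have hderiv : Integrable (fun x => fderiv ℝ φ x h) (stdGaussian n) :=
    hφ.integrable_fderiv_apply (integrable_const h)
  have hfderiv (x : EuclideanSpace ℝ (Fin n)) :
      φ x * fderiv ℝ (stdGaussianPDF n) x h = -(stdGaussianPDF n x • (φ x * ⟪h, x⟫)) := by
    simp only [(hasFDerivAt_stdGaussianPDF x).fderiv, smul_apply, innerSL_apply_apply,
      real_inner_comm, smul_eq_mul]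
    ring
  have hibp := integral_mul_fderiv_eq_neg_fderiv_mul_of_integrable (μ := volume) (f := φ)
    (g := stdGaussianPDF n) (v := h)
    (by simpa only [smul_eq_mul, mul_comm] using integrable_stdGaussian_iff.1 hderiv)
    (by simpa only [hfderiv] using! (integrable_stdGaussian_iff.1 hinner).neg)
    (by simpa only [smul_eq_mul, mul_comm] using integrable_stdGaussian_iff.1 hφint)
    (fun x _ => hφ.1.differentiable one_ne_zero x)
    (fun x _ => (hasFDerivAt_stdGaussianPDF x).differentiableAt)
  simp only [hfderiv, integral_neg, neg_inj] at hibp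
  simp only [gaussAdjoint]
  rw [integral_sub hinner hderiv, integral_stdGaussian, integral_stdGaussian, hibp, sub_eq_zero]
  simp only [smul_eq_mul, mul_comm]

end GaussAdjoint

lemma aemeasurable_of_forall_aemeasurable_inner {α E : Type*} [MeasurableSpace α]
    [NormedAddCommGroup E] [InnerProductSpace ℝ E] [FiniteDimensional ℝ E] [MeasurableSpace E]
    [BorelSpace E] {μ : Measure α} {f : α → E} (hf : ∀ h, AEMeasurable (fun x => ⟪f x, h⟫) μ) :
    AEMeasurable f μ := by
  have hsum : f = fun x => ∑ i, ⟪f x, stdOrthonormalBasis ℝ E i⟫ • stdOrthonormalBasis ℝ E i := by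
    ext x
    simpa only [real_inner_comm] using ((stdOrthonormalBasis ℝ E).sum_repr' (f x)).symm
  rw [hsum]
  exact Finset.aemeasurable_fun_sum _ fun i _ => (hf _).smul_const _

section IsGaussDeriv

variable {n : ℕ} {u : EuclideanSpace ℝ (Fin n) → ℝ} {σ : Measure (EuclideanSpace ℝ (Fin n))}
  {ν : EuclideanSpace ℝ (Fin n) → EuclideanSpace ℝ (Fin n)}

lemma isGaussDeriv_iff (hu : Integrable u (stdGaussian n))
    (hux : Integrable (fun x => u x • x) (stdGaussian n)) :
    IsGaussDeriv n u σ ν ↔ IsFiniteMeasure σ ∧ (∀ᵐ x ∂σ, ‖ν x‖ = 1) ∧ ∀ φ, IsC1b φ → ∀ h,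
      ∫ x, u x * gaussAdjoint φ h x ∂(stdGaussian n) = ∫ x, φ x * ⟪ν x, h⟫ ∂σ := by
  refine and_congr_right' (and_congr_right' (forall₃_congr fun φ hφ h => ?_))
  have hinner : Integrable (fun x => u x * φ x * ⟪h, x⟫) (stdGaussian n) := by
    refine (hφ.integrable_mul (hux.const_inner h)).congr (.of_forall fun x => ?_)
    simp only [inner_smul_right]
    ring
  have hderiv : Integrable (fun x => u x * fderiv ℝ φ x h) (stdGaussian n) := by
    simpa only [map_smul, smul_eq_mul] using hφ.integrable_fderiv_apply (hu.smul_const h)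
  simp only [gaussAdjoint, mul_sub, ← mul_assoc]
  rw [integral_sub hinner hderiv]
  constructor <;> intro <;> linarith

-- If `⟪ν, h⟫` is not measurable, `∫ φ ⟪ν, h⟫ ∂σ` is the junk value `0` for every nowhere vanishing
-- `φ`, and a general `φ` is the difference of two such functions.
lemma IsGaussDeriv.integral_mul_gaussAdjoint_eq_zero (hu : Integrable u (stdGaussian n))
    (hux : Integrable (fun x => u x • x) (stdGaussian n)) (hBV : IsGaussDeriv n u σ ν)
    {h : EuclideanSpace ℝ (Fin n)} (hh : ¬ AEMeasurable (fun x => ⟪ν x, h⟫) σ)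
    {φ : EuclideanSpace ℝ (Fin n) → ℝ} (hφ : IsC1b φ) :
    ∫ x, u x * gaussAdjoint φ h x ∂(stdGaussian n) = 0 := by
  obtain ⟨-, -, hparts⟩ := (isGaussDeriv_iff hu hux).1 hBV
  have hne {ψ : EuclideanSpace ℝ (Fin n) → ℝ} (hψ : IsC1b ψ) (hψ0 : ∀ x, ψ x ≠ 0) :
      ∫ x, u x * gaussAdjoint ψ h x ∂(stdGaussian n) = 0 := by
    rw [hparts ψ hψ h, integral_undef]
    refine fun hint => hh ?_
    refine (hψ.1.continuous.measurable.inv.aemeasurable.mul hint.aemeasurable).congr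
      (.of_forall fun x => ?_)
    exact inv_mul_cancel_left₀ (hψ0 x) _
  obtain ⟨K, hK⟩ := hφ.2
  obtain ⟨c, hc⟩ : ∃ c, ∀ x, |φ x| < c := ⟨K + 1, fun x => (hK x).1.trans_lt (lt_add_one K)⟩
  have hconst := hne (isC1b_const c) fun _ => ((abs_nonneg _).trans_lt (hc 0)).ne'
  have hadd := hne (hφ.add_const c) fun x => by linarith [neg_lt_of_abs_lt (hc x)]
  simp only [gaussAdjoint_add_const, mul_add] at hadd
  rwa [integral_add (hφ.integrable_mul_gaussAdjoint hu hux h)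
    ((isC1b_const _).integrable_mul_gaussAdjoint hu hux h), hconst, add_zero] at hadd

lemma IsGaussDeriv.zero_of_not_aemeasurable (hu : Integrable u (stdGaussian n))
    (hux : Integrable (fun x => u x • x) (stdGaussian n)) (hBV : IsGaussDeriv n u σ ν)
    (hν : ¬ AEMeasurable ν σ) : IsGaussDeriv n u 0 0 := by
  obtain ⟨k, hk⟩ := not_forall.1 (mt aemeasurable_of_forall_aemeasurable_inner hν)
  refine (isGaussDeriv_iff hu hux).2 ⟨inferInstance, by simp, fun φ hφ h => ?_⟩
  rw [integral_zero_measure]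
  by_cases hh : AEMeasurable (fun x => ⟪ν x, h⟫) σ
  · have hhk : ¬ AEMeasurable (fun x => ⟪ν x, h + k⟫) σ := fun hhk =>
      hk ((hhk.sub hh).congr (.of_forall fun x => by simp [inner_add_right]))
    have hadd := hBV.integral_mul_gaussAdjoint_eq_zero hu hux hhk hφ
    simp only [gaussAdjoint_add_right, mul_add] at hadd
    rwa [integral_add (hφ.integrable_mul_gaussAdjoint hu hux h)
      (hφ.integrable_mul_gaussAdjoint hu hux k),
      hBV.integral_mul_gaussAdjoint_eq_zero hu hux hk hφ, add_zero] at hadd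
  · exact hBV.integral_mul_gaussAdjoint_eq_zero hu hux hh hφ

lemma IsGaussDeriv.congr_ae {ν' : EuclideanSpace ℝ (Fin n) → EuclideanSpace ℝ (Fin n)}
    (hBV : IsGaussDeriv n u σ ν) (hν : ν =ᵐ[σ] ν') : IsGaussDeriv n u σ ν' := by
  refine ⟨hBV.1, ?_, fun φ hφ h => ?_⟩
  · filter_upwards [hBV.2.1, hν] with x hx hx'
    rwa [← hx']
  · have hint : ∫ x, φ x * ⟪ν x, h⟫ ∂σ = ∫ x, φ x * ⟪ν' x, h⟫ ∂σ :=
      integral_congr_ae (hν.mono fun x hx => by simp only [hx])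
    rw [hBV.2.2 φ hφ h, hint]

lemma IsGaussDeriv.exists_measurable (hu : Integrable u (stdGaussian n))
    (hux : Integrable (fun x => u x • x) (stdGaussian n)) (hBV : IsGaussDeriv n u σ ν) :
    ∃ σ' ν', Measurable ν' ∧ IsGaussDeriv n u σ' ν' ∧ σ'.real Set.univ ≤ σ.real Set.univ := by
  by_cases hν : AEMeasurable ν σ
  · exact ⟨σ, hν.mk ν, hν.measurable_mk, hBV.congr_ae hν.ae_eq_mk, le_rfl⟩
  · exact ⟨0, 0, measurable_zero, hBV.zero_of_not_aemeasurable hu hux hν, by simp⟩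

end IsGaussDeriv

section Pairing

variable {E : Type*} [NormedAddCommGroup E] [InnerProductSpace ℝ E] {G : E × E → ℝ}

lemma IsC1b.slice_fst (hG : IsC1b G) (y : E) : IsC1b fun x => G (x, y) :=
  hG.comp_of_hasFDerivAt_const fun x => hasFDerivAt_prodMk_left x y

lemma IsC1b.slice_snd (hG : IsC1b G) (x : E) : IsC1b fun y => G (x, y) :=
  hG.comp_of_hasFDerivAt_const fun y => hasFDerivAt_prodMk_right x y

lemma IsC1b.gaussAdjoint_slice_fst (hG : IsC1b G) (p : E × E) (h : E) :
    gaussAdjoint (fun x => G (x, p.2)) h p.1 = G p * ⟪h, p.1⟫ - fderiv ℝ G p (h, 0) := by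
  rw [gaussAdjoint, hG.fderiv_comp (hasFDerivAt_prodMk_left p.1 p.2)]
  rfl

lemma IsC1b.gaussAdjoint_slice_snd (hG : IsC1b G) (p : E × E) (h : E) :
    gaussAdjoint (fun y => G (p.1, y)) h p.2 = G p * ⟪h, p.2⟫ - fderiv ℝ G p (0, h) := by
  rw [gaussAdjoint, hG.fderiv_comp (hasFDerivAt_prodMk_right p.1 p.2)]
  rfl

-- The generator of the rotations is a difference of adjoints: the terms `G ⟪x, y⟫` cancel.
lemma IsC1b.fderiv_neg_snd_fst (hG : IsC1b G) (p : E × E) :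
    fderiv ℝ G p (-p.2, p.1) =
      gaussAdjoint (fun x => G (x, p.2)) p.2 p.1 - gaussAdjoint (fun y => G (p.1, y)) p.1 p.2 := by
  rw [hG.gaussAdjoint_slice_fst, hG.gaussAdjoint_slice_snd, real_inner_comm p.1,
    sub_sub_sub_cancel_left, ← map_sub, Prod.mk_sub_mk, zero_sub, sub_zero]

lemma integrable_inner_prod {α β : Type*} [MeasurableSpace α] [MeasurableSpace β] {μ : Measure α}
    {ρ : Measure β} [SFinite ρ] {f : α → E} {g : β → E} (hf : Integrable f μ)
    (hg : Integrable g ρ) : Integrable (fun p : α × β => ⟪f p.1, g p.2⟫) (μ.prod ρ) :=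
  hf.op_fst_snd (by fun_prop) ⟨1, fun x y => by simpa using norm_inner_le_norm (𝕜 := ℝ) x y⟩ hg

variable [MeasurableSpace E] [BorelSpace E] [SecondCountableTopology E] {μ : Measure E}
  [IsFiniteMeasure μ] {u : E → ℝ}

lemma IsC1b.integrable_mul_gaussAdjoint_slice_fst (hG : IsC1b G) (hμ : Integrable (fun x => x) μ)
    (hu : Integrable u μ) (hux : Integrable (fun x => u x • x) μ) :
    Integrable (fun p => u p.1 * gaussAdjoint (fun x => G (x, p.2)) p.2 p.1) (μ.prod μ) := by
  have hV : Integrable (fun p : E × E => (u p.1 • p.2, (0 : E))) (μ.prod μ) :=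
    (hu.smul_prod hμ).prodMk (integrable_zero _ _ _)
  refine ((hG.integrable_mul (integrable_inner_prod hux hμ)).sub
    (hG.integrable_fderiv_apply hV)).congr (.of_forall fun p => ?_)
  have hsmul : (u p.1 • p.2, (0 : E)) = u p.1 • (p.2, (0 : E)) := by simp
  simp only [Pi.sub_apply, hG.gaussAdjoint_slice_fst, hsmul, map_smul, inner_smul_left,
    real_inner_comm p.1, smul_eq_mul, conj_trivial]
  ring

lemma IsC1b.integrable_mul_gaussAdjoint_slice_snd (hG : IsC1b G) (hμ : Integrable (fun x => x) μ)
    (hux : Integrable (fun x => u x • x) μ) :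
    Integrable (fun p => u p.1 * gaussAdjoint (fun y => G (p.1, y)) p.1 p.2) (μ.prod μ) := by
  have hV : Integrable (fun p : E × E => ((0 : E), u p.1 • p.1)) (μ.prod μ) :=
    (integrable_zero _ _ _).prodMk (hux.comp_fst μ)
  refine ((hG.integrable_mul (integrable_inner_prod hux hμ)).sub
    (hG.integrable_fderiv_apply hV)).congr (.of_forall fun p => ?_)
  have hsmul : ((0 : E), u p.1 • p.1) = u p.1 • ((0 : E), p.1) := by simp
  simp only [Pi.sub_apply, hG.gaussAdjoint_slice_snd, hsmul, map_smul, inner_smul_left,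
    smul_eq_mul, conj_trivial]
  ring

end Pairing

section PolarPairing

variable {n : ℕ} {σ : Measure (EuclideanSpace ℝ (Fin n))}
  {ν : EuclideanSpace ℝ (Fin n) → EuclideanSpace ℝ (Fin n)}

lemma integral_abs_inner_prod_stdGaussian [SFinite σ] (hν : Integrable ν σ) :
    ∫ p, |⟪ν p.1, p.2⟫| ∂(σ.prod (stdGaussian n)) = √(2 / π) * ∫ x, ‖ν x‖ ∂σ := by
  rw [integral_prod _ (integrable_inner_prod hν integrable_id_stdGaussian).abs]
  simp only [integral_abs_inner_stdGaussian, integral_const_mul]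

variable {u : EuclideanSpace ℝ (Fin n) → ℝ}
  {G : EuclideanSpace ℝ (Fin n) × EuclideanSpace ℝ (Fin n) → ℝ}

lemma IsGaussDeriv.integrable (hν : Measurable ν) (hBV : IsGaussDeriv n u σ ν) : Integrable ν σ :=
  have := hBV.1
  .of_bound hν.aestronglyMeasurable 1 (hBV.2.1.mono fun _ hx => hx.le)

lemma IsGaussDeriv.integral_mul_fderiv_neg_snd_fst (hu : Integrable u (stdGaussian n))
    (hux : Integrable (fun x => u x • x) (stdGaussian n)) (hν : Measurable ν)
    (hBV : IsGaussDeriv n u σ ν) (hG : IsC1b G) :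
    ∫ p, u p.1 * fderiv ℝ G p (-p.2, p.1) ∂((stdGaussian n).prod (stdGaussian n)) =
      ∫ p, G p * ⟪ν p.1, p.2⟫ ∂(σ.prod (stdGaussian n)) := by
  have := hBV.1
  have hfst := hG.integrable_mul_gaussAdjoint_slice_fst integrable_id_stdGaussian hu hux
  have hsnd := hG.integrable_mul_gaussAdjoint_slice_snd integrable_id_stdGaussian hux
  have hpolar : Integrable (fun p => G p * ⟪ν p.1, p.2⟫) (σ.prod (stdGaussian n)) :=
    hG.integrable_mul (integrable_inner_prod (hBV.integrable hν) integrable_id_stdGaussian)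
  obtain ⟨-, -, hparts⟩ := (isGaussDeriv_iff hu hux).1 hBV
  simp only [hG.fderiv_neg_snd_fst, mul_sub]
  rw [integral_sub hfst hsnd, integral_prod_symm _ hfst, integral_prod _ hsnd,
    integral_prod_symm _ hpolar]
  simp only [integral_const_mul, integral_gaussAdjoint_stdGaussian (hG.slice_snd _), mul_zero,
    integral_zero, sub_zero, hparts _ (hG.slice_fst _)]

lemma IsGaussDeriv.abs_integral_mul_fderiv_neg_snd_fst_le (hu : Integrable u (stdGaussian n))
    (hux : Integrable (fun x => u x • x) (stdGaussian n)) (hν : Measurable ν)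
    (hBV : IsGaussDeriv n u σ ν) (hG : IsC1b G) (hG1 : ∀ p, |G p| ≤ 1) :
    |∫ p, u p.1 * fderiv ℝ G p (-p.2, p.1) ∂((stdGaussian n).prod (stdGaussian n))| ≤
      √(2 / π) * σ.real Set.univ := by
  have := hBV.1
  have hinner : Integrable (fun p => ⟪ν p.1, p.2⟫) (σ.prod (stdGaussian n)) :=
    integrable_inner_prod (hBV.integrable hν) integrable_id_stdGaussian
  calc |∫ p, u p.1 * fderiv ℝ G p (-p.2, p.1) ∂((stdGaussian n).prod (stdGaussian n))|
      = |∫ p, G p * ⟪ν p.1, p.2⟫ ∂(σ.prod (stdGaussian n))| := by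
        rw [hBV.integral_mul_fderiv_neg_snd_fst hu hux hν hG]
    _ ≤ ∫ p, |⟪ν p.1, p.2⟫| ∂(σ.prod (stdGaussian n)) :=
        abs_integral_le_integral_abs.trans <|
          integral_mono (hG.integrable_mul hinner).abs hinner.abs fun p => by
            simpa only [abs_mul] using mul_le_of_le_one_left (abs_nonneg _) (hG1 p)
    _ = √(2 / π) * ∫ x, ‖ν x‖ ∂σ := integral_abs_inner_prod_stdGaussian (hBV.integrable hν)
    _ = √(2 / π) * σ.real Set.univ := by
        rw [integral_congr_ae hBV.2.1, integral_const, smul_eq_mul, mul_one]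

end PolarPairing

local notation "Rot" => ContinuousLinearMap.rotation

section Rotation

variable {E : Type*} [NormedAddCommGroup E] [NormedSpace ℝ E]

lemma rotation_zero (p : E × E) : Rot 0 p = p := by simp [ContinuousLinearMap.rotation_apply]

lemma rotation_neg_rotation (θ : ℝ) (p : E × E) : Rot (-θ) (Rot θ p) = p := by
  obtain ⟨x, y⟩ := p
  simp only [ContinuousLinearMap.rotation_apply, cos_neg, sin_neg, Prod.mk.injEq]
  constructor
  · linear_combination (norm := module) (cos_sq_add_sin_sq θ) • x
  · linear_combination (norm := module) (cos_sq_add_sin_sq θ) • y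

lemma hasDerivAt_rotation_neg (θ : ℝ) (p : E × E) :
    HasDerivAt (fun θ : ℝ => Rot (-θ) p) (Rot (-θ) (-p.2, p.1)) θ := by
  simp only [ContinuousLinearMap.rotation_apply, cos_neg, sin_neg, neg_neg]
  refine (((hasDerivAt_cos θ).smul_const p.1).add ((hasDerivAt_sin θ).neg.smul_const p.2)).prodMk
    (((hasDerivAt_sin θ).smul_const p.1).add ((hasDerivAt_cos θ).smul_const p.2)) |>.congr_deriv ?_
  simp only [neg_smul, smul_neg, add_comm]

lemma norm_smul_add_smul_le_two_mul {a b : ℝ} (ha : |a| ≤ 1) (hb : |b| ≤ 1) (p : E × E) :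
    ‖a • p.1 + b • p.2‖ ≤ 2 * ‖p‖ :=
  calc ‖a • p.1 + b • p.2‖ ≤ |a| * ‖p.1‖ + |b| * ‖p.2‖ := by
        simpa only [norm_smul, norm_eq_abs] using norm_add_le (a • p.1) (b • p.2)
    _ ≤ 1 * ‖p‖ + 1 * ‖p‖ := by
        gcongr
        exacts [norm_fst_le p, norm_snd_le p]
    _ = 2 * ‖p‖ := by ring

lemma norm_rotation_le (θ : ℝ) (p : E × E) : ‖Rot θ p‖ ≤ 2 * ‖p‖ :=
  max_le (norm_smul_add_smul_le_two_mul (abs_cos_le_one θ) (abs_sin_le_one θ) p)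
    (norm_smul_add_smul_le_two_mul (by simpa using abs_sin_le_one θ) (abs_cos_le_one θ) p)

lemma IsC1b.comp_rotation {g : E × E → ℝ} (hg : IsC1b g) (θ : ℝ) :
    IsC1b fun p => g (Rot θ p) :=
  hg.comp_of_hasFDerivAt_const fun _ => (Rot θ : E × E →L[ℝ] E × E).hasFDerivAt

lemma hasDerivAt_integral_mul_comp_rotation_neg [MeasurableSpace E] [BorelSpace E]
    [SecondCountableTopology E] {μ : Measure (E × E)} {f g : E × E → ℝ} (hf : Integrable f μ)
    (hfp : Integrable (fun p => f p • p) μ) (hg : IsC1b g) (θ : ℝ) :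
    HasDerivAt (fun θ => ∫ p, f p * g (Rot (-θ) p) ∂μ)
      (∫ p, f p * fderiv ℝ (fun q => g (Rot (-θ) q)) p (-p.2, p.1) ∂μ) θ := by
  have hint (θ : ℝ) : Integrable (fun p => f p * g (Rot (-θ) p)) μ := by
    simpa only [mul_comm] using (hg.comp_rotation (-θ)).integrable_mul hf
  obtain ⟨K, hK⟩ := hg.2
  have hfderiv (θ : ℝ) (p : E × E) : fderiv ℝ (fun q => g (Rot (-θ) q)) p (-p.2, p.1) =
      fderiv ℝ g (Rot (-θ) p) (Rot (-θ) (-p.2, p.1)) := by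
    rw [hg.fderiv_comp (Rot (-θ)).hasFDerivAt, ContinuousLinearMap.comp_apply]
  have hswap (p : E × E) : ‖(-p.2, p.1)‖ = ‖p‖ := by
    simp only [Prod.norm_def, norm_neg, max_comm]
  refine (hasDerivAt_integral_of_dominated_loc_of_deriv_le (s := Set.univ)
    (F' := fun θ p => f p * fderiv ℝ (fun q => g (Rot (-θ) q)) p (-p.2, p.1))
    (bound := fun p => K * 2 * ‖f p • p‖) Filter.univ_mem (.of_forall fun θ => (hint θ).1) (hint θ)
    ?_ (.of_forall fun p θ _ => ?_) (hfp.norm.const_mul _) (.of_forall fun p θ _ => ?_)).2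
  · have hcont := (hg.comp_rotation (-θ)).1.continuous_fderiv one_ne_zero
    exact hf.1.mul (hcont.clm_apply (by fun_prop)).aestronglyMeasurable
  · calc ‖f p * fderiv ℝ (fun q => g (Rot (-θ) q)) p (-p.2, p.1)‖
        ≤ ‖f p‖ * (K * (2 * ‖(-p.2, p.1)‖)) := by
          rw [norm_mul, hfderiv]
          gcongr
          exact (ContinuousLinearMap.le_opNorm _ _).trans
            (mul_le_mul (hK _).2 (norm_rotation_le _ _) (norm_nonneg _)
              ((norm_nonneg _).trans (hK 0).2))
      _ = K * 2 * ‖f p • p‖ := by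
          rw [hswap, norm_smul]
          ring
  · rw [hfderiv]
    exact ((hg.1.differentiable one_ne_zero _).hasFDerivAt.comp_hasDerivAt θ
      (hasDerivAt_rotation_neg θ p)).const_mul (f p)

end Rotation

section PoincareBV

variable {n : ℕ} {u : EuclideanSpace ℝ (Fin n) → ℝ} {σ : Measure (EuclideanSpace ℝ (Fin n))}
  {ν : EuclideanSpace ℝ (Fin n) → EuclideanSpace ℝ (Fin n)}
  {g : EuclideanSpace ℝ (Fin n) × EuclideanSpace ℝ (Fin n) → ℝ}

lemma integrable_comp_rotation_fst (hu : Integrable u (stdGaussian n)) (θ : ℝ) :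
    Integrable (fun p => u (Rot θ p).1) ((stdGaussian n).prod (stdGaussian n)) :=
  (measurePreserving_rotation_stdGaussian θ).integrable_comp_of_integrable (hu.comp_fst _)

lemma integral_mul_comp_rotation_neg (hu : Integrable u (stdGaussian n)) (hg : IsC1b g) (θ : ℝ) :
    ∫ p, u p.1 * g (Rot (-θ) p) ∂((stdGaussian n).prod (stdGaussian n)) =
      ∫ p, u (Rot θ p).1 * g p ∂((stdGaussian n).prod (stdGaussian n)) := by
  have hrot := measurePreserving_rotation_stdGaussian (n := n) θ
  have hint : Integrable (fun p => u p.1 * g (Rot (-θ) p))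
      ((stdGaussian n).prod (stdGaussian n)) := by
    simpa only [mul_comm] using (hg.comp_rotation (-θ)).integrable_mul (hu.comp_fst (stdGaussian n))
  rw [← hrot.map_eq, integral_map hrot.aemeasurable (by rw [hrot.map_eq]; exact hint.1),
    hrot.map_eq]
  simp only [rotation_neg_rotation]

lemma IsGaussDeriv.integral_sub_comp_rotation_mul_le (hu : Integrable u (stdGaussian n))
    (hux : Integrable (fun x => u x • x) (stdGaussian n)) (hν : Measurable ν)
    (hBV : IsGaussDeriv n u σ ν) (hg : IsC1b g) (hg1 : ∀ p, |g p| ≤ 1) (θ : ℝ) :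
    ∫ p, (u p.1 - u (Rot θ p).1) * g p ∂((stdGaussian n).prod (stdGaussian n)) ≤
      √(2 / π) * σ.real Set.univ * |θ| := by
  have hup : Integrable (fun p : _ × _ => u p.1 • p) ((stdGaussian n).prod (stdGaussian n)) :=
    (hux.comp_fst _).prodMk (hu.smul_prod integrable_id_stdGaussian)
  have hmean := Convex.norm_image_sub_le_of_norm_hasDerivWithin_le (s := Set.univ) (x := θ) (y := 0)
    (fun θ _ => (hasDerivAt_integral_mul_comp_rotation_neg
      (hu.comp_fst _) hup hg θ).hasDerivWithinAt)
    (fun θ _ => hBV.abs_integral_mul_fderiv_neg_snd_fst_le hu hux hν (hg.comp_rotation (-θ))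
      fun p => hg1 _) convex_univ trivial trivial
  simp only [integral_mul_comp_rotation_neg hu hg, rotation_zero, zero_sub, norm_neg,
    norm_eq_abs] at hmean
  simp only [sub_mul]
  rw [integral_sub]
  · exact (le_abs_self _).trans hmean
  · simpa only [mul_comm] using hg.integrable_mul (hu.comp_fst (stdGaussian n))
  · simpa only [mul_comm] using hg.integrable_mul (integrable_comp_rotation_fst hu θ)

lemma IsGaussDeriv.integral_abs_sub_comp_rotation_le (hu : Integrable u (stdGaussian n))
    (hux : Integrable (fun x => u x • x) (stdGaussian n)) (hBV : IsGaussDeriv n u σ ν) (θ : ℝ) :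
    ∫ p, |u p.1 - u (Rot θ p).1| ∂((stdGaussian n).prod (stdGaussian n)) ≤
      √(2 / π) * σ.real Set.univ * |θ| := by
  obtain ⟨σ', ν', hν', hBV', hσ'⟩ := hBV.exists_measurable hu hux
  refine integral_abs_le_of_forall_isUnitTestFunction
    ((hu.comp_fst _).sub (integrable_comp_rotation_fst hu θ)) fun g hg => ?_
  refine (hBV'.integral_sub_comp_rotation_mul_le hu hux hν'
    (.of_hasCompactSupport hg.contDiff hg.hasCompactSupport) hg.abs_le_one θ).trans ?_
  gcongr

theorem poincare_BV_general (hu : Integrable u (stdGaussian n))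
    (hux : Integrable (fun x => u x • x) (stdGaussian n)) (hBV : IsGaussDeriv n u σ ν)
    {t : ℝ} (ht : 0 ≤ t) :
    (∫ x, ∫ y, |u x - u (exp (-t) • x + √(1 - exp (-2 * t)) • y)|
        ∂(stdGaussian n) ∂(stdGaussian n)) ≤
      (√(2 / π) * ∫ s in (0 : ℝ)..t, exp (-s) / √(1 - exp (-2 * s))) * (σ Set.univ).toReal := by
  set θ := arccos (exp (-t))
  have hcos : cos θ = exp (-t) :=
    cos_arccos (by linarith [exp_pos (-t)]) (exp_le_one_iff.2 (neg_nonpos.2 ht))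
  have hsin : sin θ = √(1 - exp (-2 * t)) := by
    rw [sin_arccos, ← exp_nat_mul]
    push_cast
    ring_nf
  have hint : Integrable (fun p => u p.1 - u (Rot θ p).1)
      ((stdGaussian n).prod (stdGaussian n)) :=
    (hu.comp_fst _).sub (integrable_comp_rotation_fst hu θ)
  calc ∫ x, ∫ y, |u x - u (exp (-t) • x + √(1 - exp (-2 * t)) • y)|
          ∂(stdGaussian n) ∂(stdGaussian n)
      = ∫ p, |u p.1 - u (Rot θ p).1| ∂((stdGaussian n).prod (stdGaussian n)) := by
        rw [integral_prod _ hint.abs, ← hcos, ← hsin]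
        rfl
    _ ≤ √(2 / π) * σ.real Set.univ * |θ| := hBV.integral_abs_sub_comp_rotation_le hu hux θ
    _ = _ := by
        rw [abs_of_nonneg (arccos_nonneg _), integral_exp_neg_div_sqrt_one_sub_exp ht,
          mul_right_comm]
        rfl

end PoincareBV

/-- Gaussian Poincaré-type estimate for `BV` functions:
`∫∫ |u(x) − u(e^{-t}x + √(1−e^{-2t})y)| dγ(x) dγ(y) ≤ c_t |D_γ u|(ℝⁿ)`. -/
theorem poincare_BV (n : ℕ) (u : EuclideanSpace ℝ (Fin n) → ℝ)
    (hu : Measurable u) (C : ℝ) (hb : ∀ x, |u x| ≤ C)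
    (σ : Measure (EuclideanSpace ℝ (Fin n)))
    (ν : EuclideanSpace ℝ (Fin n) → EuclideanSpace ℝ (Fin n))
    (hBV : IsGaussDeriv n u σ ν) (t : ℝ) (ht : 0 < t) :
    (∫ x, ∫ y, |u x - u (Real.exp (-t) • x + Real.sqrt (1 - Real.exp (-2 * t)) • y)|
        ∂(stdGaussian n) ∂(stdGaussian n)) ≤
      (Real.sqrt (2 / π) * ∫ s in (0:ℝ)..t, Real.exp (-s) / Real.sqrt (1 - Real.exp (-2 * s)))
        * (σ Set.univ).toReal := by
  have hint : Integrable u (stdGaussian n) := .of_bound hu.aestronglyMeasurable C (.of_forall hb)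
  have hintx : Integrable (fun x => u x • x) (stdGaussian n) :=
    integrable_id_stdGaussian.bdd_smul (φ := u) C hint.1 (.of_forall hb)
  exact poincare_BV_general hint hintx hBV ht.le
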